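/- For every linear automorphism A of ℝ^d with det A > 0 and every open neighbourhood U of 0 in ℝ^d, there exists a C^∞ diffeomorphism F : ℝ^d → ℝ^d such that F(0) = 0, the total derivative of F at 0 equals A, and F(x) = x for all x ∉ U. -/

import Mathlib

/-!
The derivatives at `0` of the diffeomorphisms that fix `0` and are the identity off `U` form a
submonoid `S` of `E →L[ℝ] E`. It is a neighbourhood of `1`: if `χ` is smooth with compact support in
`U` and is the identity near `0`, then for small `B` the map `x ↦ x + B (χ x)` is a Lipschitz-small
perturbation of the identity, hence a diffeomorphism, with derivative `1 + B` at `0`. A submonoid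
which is a neighbourhood of `1` contains every one-parameter semigroup `γ`, as
`γ t = γ (t / k) ^ k`; so `S` contains all transvections and all positive homotheties, and these
generate the operators of positive determinant.
-/

open Filter Set
open scoped Topology Manifold ContDiff NNReal

section SubmonoidNhdsOne

theorem mem_submonoid_of_add_eq_mul {M : Type*} [Monoid M] [TopologicalSpace M] {S : Submonoid M}
    (hS : (S : Set M) ∈ 𝓝 1) {γ : ℝ → M} (hγ : ContinuousAt γ 0) (h_zero : γ 0 = 1)
    (h_add : ∀ s t, γ (s + t) = γ s * γ t) (t : ℝ) : γ t ∈ S := by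
  let T : AddSubmonoid ℝ :=
    { carrier := γ ⁻¹' S
      zero_mem' := by simp only [mem_preimage, h_zero, SetLike.mem_coe, one_mem]
      add_mem' := fun {a b} ha hb ↦ by
        simpa only [mem_preimage, h_add, SetLike.mem_coe] using mul_mem ha hb }
  have hT : (T : Set ℝ) ∈ 𝓝 0 := hγ.preimage_mem_nhds (h_zero ▸ hS)
  obtain ⟨k, hkT, hk⟩ := (((tendsto_const_div_atTop_nhds_zero_nat t).eventually hT).and
    (eventually_ne_atTop 0)).exists
  have hkt : k • (t / k) = t := by
    rw [nsmul_eq_mul, mul_div_cancel₀ t (Nat.cast_ne_zero.2 hk)]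
  exact hkt ▸ T.nsmul_mem hkT k

variable {A : Type*} [Ring A] [Algebra ℝ A] [TopologicalSpace A] [ContinuousSMul ℝ A]
  {S : Submonoid A}

theorem one_add_mem_submonoid_of_mul_self_eq_zero [ContinuousAdd A] (hS : (S : Set A) ∈ 𝓝 1)
    {x : A} (hx : x * x = 0) : 1 + x ∈ S := by
  have h_add (s t : ℝ) : 1 + (s + t) • x = (1 + s • x) * (1 + t • x) := by
    rw [mul_add, mul_one, add_mul, one_mul, smul_mul_smul_comm, hx, smul_zero, add_zero, add_smul,
      add_assoc]
  have h := mem_submonoid_of_add_eq_mul hS (γ := fun t ↦ 1 + t • x)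
    (by fun_prop) (by simp) h_add 1
  simpa only [one_smul] using h

theorem smul_one_mem_submonoid_of_pos (hS : (S : Set A) ∈ 𝓝 1) {c : ℝ} (hc : 0 < c) :
    c • (1 : A) ∈ S := by
  have h_add (s t : ℝ) : Real.exp (s + t) • (1 : A) = Real.exp s • 1 * Real.exp t • 1 := by
    rw [Real.exp_add, smul_mul_smul_comm, one_mul]
  have h := mem_submonoid_of_add_eq_mul hS (γ := fun t ↦ Real.exp t • (1 : A))
    (by fun_prop) (by simp) h_add (Real.log c)
  simpa only [Real.exp_log hc] using h

end SubmonoidNhdsOne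

section SpecialLinearGroup

open Matrix Matrix.SpecialLinearGroup

variable {n K : Type*} [Fintype n] [DecidableEq n] [Field K]

theorem diag2n_eq_transvection_mul {i j : n} (hij : i ≠ j) {a : K} (ha : a ≠ 0) :
    diag2n hij a ha = SpecialLinearGroup.transvection hij (a - 1) *
      (SpecialLinearGroup.transvection hij.symm 1 *
        (SpecialLinearGroup.transvection hij (a⁻¹ - 1) *
          SpecialLinearGroup.transvection hij.symm (-a))) := by
  apply Subtype.ext
  rw [diag2n_coe]
  change Matrix.diagonal _ = Matrix.transvection i j (a - 1) * (Matrix.transvection j i 1 *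
    (Matrix.transvection i j (a⁻¹ - 1) * Matrix.transvection j i (-a)))
  have h_apply (k l : n) (c : K) : Matrix.transvection j i c k l =
      (if k = l then 1 else 0) + if j = k ∧ i = l then c else 0 := by
    rw [Matrix.transvection, Matrix.add_apply, one_apply, single_apply]
  ext k l
  by_cases hki : k = i <;> by_cases hkj : k = j <;>
    grind [diagonal_apply, transvection_mul_apply_same, transvection_mul_apply_of_ne]

theorem closure_range_toSpecialLinearGroup :
    Submonoid.closure (range (TransvectionStruct.toSpecialLinearGroup (ι := n) (F := K))) = ⊤ := by
  have h_trans {i j : n} (hij : i ≠ j) (c : K) : SpecialLinearGroup.transvection hij c ∈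
      Submonoid.closure (range TransvectionStruct.toSpecialLinearGroup) :=
    Submonoid.subset_closure ⟨⟨i, j, hij, c⟩, rfl⟩
  refine eq_top_iff.2 fun M _ ↦ ?_
  rcases subsingleton_or_nontrivial n with hn | hn
  · exact Subsingleton.elim 1 M ▸ one_mem _
  · refine diagonal_transvection_induction' _ M (fun i j hij c hc ↦ ?_)
      (fun _ _ hij c ↦ h_trans hij c) fun _ _ ↦ mul_mem
    rw [diag2n_eq_transvection_mul hij hc]
    exact mul_mem (h_trans _ _) (mul_mem (h_trans _ _) (mul_mem (h_trans _ _) (h_trans _ _)))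

end SpecialLinearGroup

section PositiveDeterminant

theorem specialLinearGroup_coe_mem_submonoid {n : Type*} [Fintype n] [DecidableEq n]
    {S : Submonoid (Matrix n n ℝ)} (hS : (S : Set (Matrix n n ℝ)) ∈ 𝓝 1)
    (M : Matrix.SpecialLinearGroup n ℝ) : (M : Matrix n n ℝ) ∈ S := by
  suffices h : S.comap Matrix.SpecialLinearGroup.coeMonoidHom = ⊤ from
    Submonoid.mem_comap.1 (h ▸ Submonoid.mem_top M)
  rw [eq_top_iff, ← closure_range_toSpecialLinearGroup, Submonoid.closure_le]
  rintro _ ⟨t, rfl⟩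
  exact one_add_mem_submonoid_of_mul_self_eq_zero hS
    (Matrix.single_mul_single_of_ne _ _ _ _ t.hij.symm _)

theorem matrix_mem_submonoid_of_det_pos {n : Type*} [Fintype n] [DecidableEq n]
    {S : Submonoid (Matrix n n ℝ)} (hS : (S : Set (Matrix n n ℝ)) ∈ 𝓝 1) {M : Matrix n n ℝ}
    (hM : 0 < M.det) : M ∈ S := by
  cases isEmpty_or_nonempty n
  · exact Subsingleton.elim 1 M ▸ one_mem S
  obtain ⟨c, hc, hcM⟩ : ∃ c : ℝ, 0 < c ∧ c ^ Fintype.card n = M.det :=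
    ⟨_, Real.rpow_pos_of_pos hM _, Real.rpow_inv_natCast_pow hM.le Fintype.card_ne_zero⟩
  have h_det : (c⁻¹ • M).det = 1 := by
    rw [Matrix.det_smul, ← hcM, inv_pow, inv_mul_cancel₀ (pow_pos hc _).ne']
  have h_prod : c • (1 : Matrix n n ℝ) * c⁻¹ • M = M := by
    rw [smul_mul_smul_comm, mul_inv_cancel₀ hc.ne', one_mul, one_smul]
  exact h_prod ▸ mul_mem (smul_one_mem_submonoid_of_pos hS hc)
    (specialLinearGroup_coe_mem_submonoid hS ⟨c⁻¹ • M, h_det⟩)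

theorem mem_submonoid_of_det_pos {E : Type*} [NormedAddCommGroup E] [NormedSpace ℝ E]
    [FiniteDimensional ℝ E] {S : Submonoid (E →L[ℝ] E)} (hS : (S : Set (E →L[ℝ] E)) ∈ 𝓝 1)
    {A : E →L[ℝ] E} (hA : 0 < A.det) : A ∈ S := by
  let b := Module.finBasis ℝ E
  let Φ : Matrix (Fin (Module.finrank ℝ E)) (Fin (Module.finrank ℝ E)) ℝ ≃ₐ[ℝ] (E →L[ℝ] E) :=
    (Matrix.toLinAlgEquiv b).trans (Module.End.toContinuousLinearMap E)
  have hΦ : Continuous Φ := Φ.toLinearMap.continuous_of_finiteDimensional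
  have h_det : 0 < (Φ.symm A).det := by
    change 0 < (LinearMap.toMatrix b b A).det
    rwa [LinearMap.det_toMatrix]
  have h_mem : Φ.symm A ∈ S.comap Φ :=
    matrix_mem_submonoid_of_det_pos (hΦ.continuousAt.preimage_mem_nhds (by rwa [map_one])) h_det
  simpa only [Submonoid.mem_comap, Φ.apply_symm_apply] using h_mem

end PositiveDeterminant

section Diffeomorphisms

theorem exists_diffeomorph_eq_add_of_lipschitzWith {𝕜 E : Type*} [NontriviallyNormedField 𝕜]
    [NormedAddCommGroup E] [NormedSpace 𝕜 E] [CompleteSpace E] {n : ℕ∞ω} (hn : n ≠ 0) {g : E → E}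
    (hg : ContDiff 𝕜 n g) {K : ℝ≥0} (hK : K < 1) (hgK : LipschitzWith K g) :
    ∃ F : Diffeomorph 𝓘(𝕜, E) 𝓘(𝕜, E) E E n, ∀ x, F x = x + g x := by
  let f : E → E := fun x ↦ x + g x
  have hf : ContDiff 𝕜 n f := contDiff_id.add hg
  have h_approx : ApproximatesLinearOn f (ContinuousLinearEquiv.refl 𝕜 E : E →L[𝕜] E) univ K := by
    refine LipschitzOnWith.approximatesLinearOn (lipschitzOnWith_univ.2 ?_)
    convert hgK using 1
    ext x
    simp [f]
  have hK_inv : Subsingleton E ∨ K < ‖((ContinuousLinearEquiv.refl 𝕜 E).symm : E →L[𝕜] E)‖₊⁻¹ :=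
    (subsingleton_or_nontrivial E).imp_right fun (_ : Nontrivial E) ↦ by simpa using hK
  have h_deriv (x : E) : ∃ e : E ≃L[𝕜] E, HasFDerivAt f (e : E →L[𝕜] E) x := by
    have hgx : ‖-fderiv 𝕜 g x‖ < 1 :=
      (norm_neg _).trans_lt ((norm_fderiv_le_of_lipschitz 𝕜 hgK).trans_lt hK)
    refine ⟨.ofUnit (.oneSub _ hgx), ?_⟩
    have hfx := (hasFDerivAt_id x).add (hg.differentiable hn x).hasFDerivAt
    have h_unit : ContinuousLinearMap.id 𝕜 E + fderiv 𝕜 g x =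
        ContinuousLinearEquiv.ofUnit (Units.oneSub _ hgx) := (sub_neg_eq_add _ _).symm
    exact h_unit ▸ hfx
  choose f' hf' using h_deriv
  let F : E ≃ₜ E := h_approx.toHomeomorph f hK_inv
  exact ⟨⟨F.toEquiv, hf.contMDiff, (F.contDiff_symm hf' hf).contMDiff⟩, fun _ ↦ rfl⟩

variable {E : Type*} [NormedAddCommGroup E] [NormedSpace ℝ E]

/-- The derivatives at `0` of the smooth diffeomorphisms of `E` which fix `0` and agree with the
identity outside `U`. -/
def diffeomorphDerivSubmonoid (U : Set E) : Submonoid (E →L[ℝ] E) where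
  carrier := {A | ∃ F : E ≃ₘ[ℝ] E, F 0 = 0 ∧ HasFDerivAt F A 0 ∧ ∀ x ∉ U, F x = x}
  one_mem' := ⟨.refl _ _ _, rfl, hasFDerivAt_id 0, fun _ _ ↦ rfl⟩
  mul_mem' := by
    rintro A B ⟨F, hF₀, hF, hFU⟩ ⟨G, hG₀, hG, hGU⟩
    refine ⟨G.trans F, by simp [hG₀, hF₀], ?_, fun x hx ↦ by simp [hGU x hx, hFU x hx]⟩
    rw [← hG₀] at hF
    exact hF.comp 0 hG

variable [FiniteDimensional ℝ E] {U : Set E}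

theorem exists_contDiff_lipschitzWith_eventuallyEq_id (hU : U ∈ 𝓝 0) :
    ∃ χ : E → E, ContDiff ℝ ∞ χ ∧ (∃ K, LipschitzWith K χ) ∧ χ =ᶠ[𝓝 0] id ∧ ∀ x ∉ U, χ x = 0 := by
  obtain ⟨r, hr, hrU⟩ := Metric.mem_nhds_iff.1 hU
  let φ : ContDiffBump (0 : E) := ⟨r / 2, r, half_pos hr, half_lt_self hr⟩
  have h_smooth : ContDiff ℝ ∞ fun x ↦ φ x • x := φ.contDiff.smul contDiff_id
  refine ⟨fun x ↦ φ x • x, h_smooth, ?_, ?_, fun x hx ↦ ?_⟩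
  · exact h_smooth.lipschitzWith_of_hasCompactSupport φ.hasCompactSupport.smul_right (by simp)
  · filter_upwards [φ.eventuallyEq_one] with x hx
    simp [hx]
  · have hφx : φ x = 0 := φ.zero_of_le_dist (not_lt.1 fun h ↦ hx (hrU h))
    simp [hφx]

theorem diffeomorphDerivSubmonoid_mem_nhds_one (hU : U ∈ 𝓝 0) :
    (diffeomorphDerivSubmonoid U : Set (E →L[ℝ] E)) ∈ 𝓝 1 := by
  obtain ⟨χ, hχ, ⟨K, hK⟩, hχ_id, hχU⟩ := exists_contDiff_lipschitzWith_eventuallyEq_id hU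
  have h_small : ∀ᶠ A : E →L[ℝ] E in 𝓝 1, ‖A - 1‖₊ * K < 1 := by
    have h_cont : Continuous fun A : E →L[ℝ] E ↦ ‖A - 1‖₊ * K := by fun_prop
    exact h_cont.continuousAt.eventually_lt continuousAt_const (by simp)
  filter_upwards [h_small] with A hA
  obtain ⟨F, hF⟩ := exists_diffeomorph_eq_add_of_lipschitzWith (by simp)
    ((A - 1).contDiff.comp hχ) hA ((A - 1).lipschitz.comp hK)
  have hFA : F =ᶠ[𝓝 0] A := by
    filter_upwards [hχ_id] with x hx
    simp [hF, hx]
  exact ⟨F, by simp [hFA.eq_of_nhds], A.hasFDerivAt.congr_of_eventuallyEq hFA,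
    fun x hx ↦ by simp [hF, hχU x hx]⟩

theorem differential_extension_euclidean_general (hU : U ∈ 𝓝 0) {A : E →L[ℝ] E} (hA : 0 < A.det) :
    ∃ F : E ≃ₘ[ℝ] E, F 0 = 0 ∧ HasFDerivAt F A 0 ∧ ∀ x ∉ U, F x = x :=
  mem_submonoid_of_det_pos (diffeomorphDerivSubmonoid_mem_nhds_one hU) hA

end Diffeomorphisms

/-- For every linear automorphism `A` of `ℝ^d` with positive determinant and every open
neighbourhood `U` of `0`, there is a smooth diffeomorphism `F` of `ℝ^d` fixing `0`, with
derivative `A` at `0`, that agrees with the identity outside `U`. -/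
theorem differential_extension_euclidean
    (d : ℕ) (A : EuclideanSpace ℝ (Fin d) ≃ₗ[ℝ] EuclideanSpace ℝ (Fin d))
    (hA : 0 < LinearMap.det (A : EuclideanSpace ℝ (Fin d) →ₗ[ℝ] EuclideanSpace ℝ (Fin d)))
    (U : Set (EuclideanSpace ℝ (Fin d))) (hU : IsOpen U) (h0 : (0 : EuclideanSpace ℝ (Fin d)) ∈ U) :
    ∃ F : EuclideanSpace ℝ (Fin d) ≃ EuclideanSpace ℝ (Fin d),
      ContDiff ℝ (⊤ : ℕ∞) F ∧ ContDiff ℝ (⊤ : ℕ∞) F.symm ∧ F 0 = 0 ∧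
      (∀ v, fderiv ℝ F 0 v = A v) ∧ ∀ x ∉ U, F x = x := by
  obtain ⟨F, hF₀, hF, hFU⟩ := differential_extension_euclidean_general (hU.mem_nhds h0)
    (A := (A.toContinuousLinearEquiv : _ →L[ℝ] _)) hA
  exact ⟨F.toEquiv, F.contDiff, F.symm.contDiff, hF₀, fun v ↦ by simp [hF.fderiv], hFU⟩
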